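/- arXiv:1702.06714 — 2 statements merged into one kernel-verified Lean document; each statement's English description precedes it below -/
import Mathlib

section
/- Let U ⊆ ℝⁿ be a connected open set, let D be a torsion-free affine connection on U with smooth Christoffel symbols Γ_{ij}^k, and let μ ∈ ℝ. Then the real vector space E(μ) of smooth solutions h : U → ℝ of the affine quasi-Einstein equation ∂_i∂_j h − Σ_k Γ_{ij}^k ∂_k h = μ h (ρ_s)_{ij} has dimension at most n + 1. -/
/-!
A solution `h` is determined by its 1-jet `(h, ∂₁h, …, ∂ₙh)` at a single point of `U`. The
equation expresses each second derivative `∂_i∂_j h` as a linear combination of `h` and the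
`∂_k h` with continuous coefficients, so along a segment in `U` the 1-jet obeys a linear
first-order ODE, and Grönwall's inequality shows that it vanishes along the whole segment if it
vanishes at one end (`jet_zero_of_segment`). Hence the zero set of the 1-jet is both open and
relatively closed in `U`, so on connected `U` a solution whose 1-jet vanishes at one point is zero
(`eqOn_zero_of_jet_zero`). Evaluating the 1-jet at a point therefore embeds `E(μ)` into
`ℝ × ℝⁿ`, which has dimension `n + 1`.
-/

open scoped ContDiff

/-- Partial derivative `∂_i f` in coordinates on `ℝⁿ`. -/
noncomputable def pd {n : ℕ} (i : Fin n) (f : (Fin n → ℝ) → ℝ) : (Fin n → ℝ) → ℝ :=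
  fun x => fderiv ℝ f x (Pi.single i 1)

/-- Hessian `(Hess_h)_{ij} = ∂_i∂_j h − Σ_k Γ_{ij}^k ∂_k h` of `h` w.r.t. the connection `Γ`. -/
noncomputable def hessD {n : ℕ} (Γ : Fin n → Fin n → Fin n → (Fin n → ℝ) → ℝ)
    (h : (Fin n → ℝ) → ℝ) (i j : Fin n) : (Fin n → ℝ) → ℝ :=
  fun x => pd i (pd j h) x - ∑ k, Γ i j k x * pd k h x

/-- Ricci tensor
`ρ_{ij} = Σ_k (∂_k Γ_{ij}^k − ∂_i Γ_{kj}^k) + Σ_{k,l} (Γ_{kl}^k Γ_{ij}^l − Γ_{il}^k Γ_{kj}^l)`. -/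
noncomputable def ricciD {n : ℕ} (Γ : Fin n → Fin n → Fin n → (Fin n → ℝ) → ℝ)
    (i j : Fin n) : (Fin n → ℝ) → ℝ :=
  fun x => (∑ k, (pd k (Γ i j k) x - pd i (Γ k j k) x))
    + ∑ k, ∑ l, (Γ k l k x * Γ i j l x - Γ i l k x * Γ k j l x)

/-- Symmetrized Ricci tensor `(ρ_s)_{ij} = (ρ_{ij} + ρ_{ji})/2`. -/
noncomputable def ricciSymD {n : ℕ} (Γ : Fin n → Fin n → Fin n → (Fin n → ℝ) → ℝ)
    (i j : Fin n) : (Fin n → ℝ) → ℝ :=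
  fun x => (ricciD Γ i j x + ricciD Γ j i x) / 2

/-- The set of smooth solutions on `V` of the affine quasi-Einstein equation with
eigenvalue `μ` for the connection `Γ`. -/
def solSet {n : ℕ} (V : Set (Fin n → ℝ))
    (Γ : Fin n → Fin n → Fin n → (Fin n → ℝ) → ℝ) (μ : ℝ) : Set ((Fin n → ℝ) → ℝ) :=
  {h | ContDiffOn ℝ ∞ h V ∧ ∀ x ∈ V, ∀ i j, hessD Γ h i j x = μ * h x * ricciSymD Γ i j x}

lemma contDiffOn_pd {n : ℕ} {U : Set (Fin n → ℝ)} (hU : IsOpen U) {f : (Fin n → ℝ) → ℝ}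
    (hf : ContDiffOn ℝ ∞ f U) (i : Fin n) : ContDiffOn ℝ ∞ (pd i f) U :=
  (hf.fderiv_of_isOpen hU (by simp)).clm_apply contDiffOn_const

lemma fderiv_eq_sum_pd {n : ℕ} (f : (Fin n → ℝ) → ℝ) (x v : Fin n → ℝ) :
    fderiv ℝ f x v = ∑ i, v i * pd i f x := by
  conv_lhs => rw [pi_eq_sum_univ' v]
  simp only [map_sum, map_smul, smul_eq_mul, pd]

lemma continuousOn_ricciSymD {n : ℕ} {U : Set (Fin n → ℝ)} (hU : IsOpen U)
    {Γ : Fin n → Fin n → Fin n → (Fin n → ℝ) → ℝ}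
    (hΓ : ∀ i j k, ContDiffOn ℝ ∞ (Γ i j k) U) (i j : Fin n) :
    ContinuousOn (ricciSymD Γ i j) U := by
  have h0 : ∀ i j k, ContinuousOn (Γ i j k) U := fun i j k => (hΓ i j k).continuousOn
  have h1 : ∀ l i j k, ContinuousOn (pd l (Γ i j k)) U :=
    fun l i j k => (contDiffOn_pd hU (hΓ i j k) l).continuousOn
  have h2 : ∀ i j, ContinuousOn (ricciD Γ i j) U := fun i j =>
    (continuousOn_finsetSum _ fun k _ => (h1 _ _ _ _).sub (h1 _ _ _ _)).add
      (continuousOn_finsetSum _ fun k _ => continuousOn_finsetSum _ fun l _ =>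
        ((h0 _ _ _).mul (h0 _ _ _)).sub ((h0 _ _ _).mul (h0 _ _ _)))
  exact ((h2 i j).add (h2 j i)).div_const 2

/-- The 1-jet of `f` at `x`: its value and its first partial derivatives. -/
noncomputable def jet {n : ℕ} (f : (Fin n → ℝ) → ℝ) (x : Fin n → ℝ) : ℝ × (Fin n → ℝ) :=
  (f x, fun j => pd j f x)

/-- The 1-jet of a solution satisfies a linear ODE along a segment, so by Grönwall's inequality its
vanishing propagates from one endpoint to the other. -/
lemma jet_zero_of_segment {n : ℕ} {U : Set (Fin n → ℝ)} (hU : IsOpen U)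
    {Γ : Fin n → Fin n → Fin n → (Fin n → ℝ) → ℝ}
    (hΓ : ∀ i j k, ContDiffOn ℝ ∞ (Γ i j k) U) {μ : ℝ} {h : (Fin n → ℝ) → ℝ}
    (hh : h ∈ solSet U Γ μ) {x y : Fin n → ℝ} (hxy : segment ℝ x y ⊆ U)
    (hx : jet h x = 0) : jet h y = 0 := by
  obtain ⟨hs, heq⟩ := hh
  set v := y - x with hv
  set γ : ℝ → (Fin n → ℝ) := fun t => x + t • v with hγ
  have hγU : ∀ t ∈ Set.Icc (0 : ℝ) 1, γ t ∈ U := fun t ht => hxy (by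
    rw [segment_eq_image']; exact ⟨t, ht, rfl⟩)
  have hγd : ∀ t, HasDerivAt γ v t := fun t => by
    have h1 := ((hasDerivAt_id t).smul_const v).const_add x
    rw [one_smul] at h1
    exact h1
  have hγc : Continuous γ := by fun_prop
  have hchain : ∀ f : (Fin n → ℝ) → ℝ, ContDiffOn ℝ ∞ f U → ∀ t ∈ Set.Icc (0 : ℝ) 1,
      HasDerivAt (fun s => f (γ s)) (∑ i, v i * pd i f (γ t)) t := fun f hf t ht => by
    have hd := ((hf.differentiableOn (by simp)).differentiableAt
      (hU.mem_nhds (hγU t ht))).hasFDerivAt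
    rw [← fderiv_eq_sum_pd]
    exact hd.comp_hasDerivAt t (hγd t)
  have hF : ∀ t ∈ Set.Icc (0 : ℝ) 1, HasDerivAt (fun s => jet h (γ s))
      (∑ i, v i * pd i h (γ t), fun j => ∑ i, v i * pd i (pd j h) (γ t)) t := fun t ht =>
    (hchain h hs t ht).prodMk
      (hasDerivAt_pi.2 fun j => hchain _ (contDiffOn_pd hU hs j) t ht)
  -- `G t` dominates every row sum of the coefficient matrix of the ODE satisfied by the 1-jet.
  let G : ℝ → ℝ := fun t => ∑ i, |v i| + ∑ j, ∑ i, |v i| *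
    (∑ k, |Γ i j k (γ t)| + |μ * ricciSymD Γ i j (γ t)|)
  have hcomp : ∀ f : (Fin n → ℝ) → ℝ, ContinuousOn f U →
      ContinuousOn (fun t => f (γ t)) (Set.Icc 0 1) := fun f hf =>
    hf.comp hγc.continuousOn hγU
  have hG : ContinuousOn G (Set.Icc 0 1) :=
    continuousOn_const.add (continuousOn_finsetSum _ fun j _ => continuousOn_finsetSum _ fun i _ =>
      continuousOn_const.mul ((continuousOn_finsetSum _ fun k _ =>
        (hcomp _ (hΓ i j k).continuousOn).abs).add
        (continuousOn_const.mul (hcomp _ (continuousOn_ricciSymD hU hΓ i j))).abs))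
  obtain ⟨K, hK⟩ := isCompact_Icc.bddAbove_image hG
  have hbound : ∀ t ∈ Set.Icc (0 : ℝ) 1,
      ‖((∑ i, v i * pd i h (γ t), fun j => ∑ i, v i * pd i (pd j h) (γ t)) :
        ℝ × (Fin n → ℝ))‖ ≤ K * ‖jet h (γ t)‖ := fun t ht => by
    have hGK : G t ≤ K := hK ⟨t, ht, rfl⟩
    have hN := norm_nonneg (jet h (γ t))
    refine le_trans ?_ (mul_le_mul_of_nonneg_right hGK hN)
    have b0 : |h (γ t)| ≤ ‖jet h (γ t)‖ := norm_fst_le (jet h (γ t))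
    have b1 : ∀ k, |pd k h (γ t)| ≤ ‖jet h (γ t)‖ := fun k =>
      (norm_le_pi_norm (jet h (γ t)).2 k).trans (norm_snd_le _)
    generalize ‖jet h (γ t)‖ = N at *
    have hGN : 0 ≤ G t * N := mul_nonneg (by positivity) hN
    refine norm_prod_le_iff.2 ⟨?_, (pi_norm_le_iff_of_nonneg hGN).2 fun j => ?_⟩
    · calc |∑ i, v i * pd i h (γ t)| ≤ ∑ i, |v i * pd i h (γ t)| := Finset.abs_sum_le_sum_abs _ _
        _ ≤ ∑ i, |v i| * N := Finset.sum_le_sum fun i _ => by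
            rw [abs_mul]; exact mul_le_mul_of_nonneg_left (b1 i) (abs_nonneg _)
        _ = (∑ i, |v i|) * N := by rw [Finset.sum_mul]
        _ ≤ G t * N := mul_le_mul_of_nonneg_right
            (le_add_of_nonneg_right (by positivity)) hN
    · have hij : ∀ i, |pd i (pd j h) (γ t)| ≤
          (∑ k, |Γ i j k (γ t)| + |μ * ricciSymD Γ i j (γ t)|) * N := fun i => by
        have e : pd i (pd j h) (γ t) = ∑ k, Γ i j k (γ t) * pd k h (γ t)
            + μ * ricciSymD Γ i j (γ t) * h (γ t) := by
          have := heq (γ t) (hγU t ht) i j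
          simp only [hessD] at this
          linarith
        rw [e, add_mul, Finset.sum_mul]
        refine (abs_add_le _ _).trans (add_le_add ((Finset.abs_sum_le_sum_abs _ _).trans
          (Finset.sum_le_sum fun k _ => ?_)) ?_)
        · rw [abs_mul]; exact mul_le_mul_of_nonneg_left (b1 k) (abs_nonneg _)
        · rw [abs_mul _ (h (γ t))]; exact mul_le_mul_of_nonneg_left b0 (abs_nonneg _)
      calc |∑ i, v i * pd i (pd j h) (γ t)|
          ≤ ∑ i, |v i * pd i (pd j h) (γ t)| := Finset.abs_sum_le_sum_abs _ _
        _ ≤ ∑ i, |v i| * (∑ k, |Γ i j k (γ t)| + |μ * ricciSymD Γ i j (γ t)|) * N :=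
            Finset.sum_le_sum fun i _ => by
              rw [abs_mul, mul_assoc]; exact mul_le_mul_of_nonneg_left (hij i) (abs_nonneg _)
        _ = (∑ i, |v i| * (∑ k, |Γ i j k (γ t)| + |μ * ricciSymD Γ i j (γ t)|)) * N := by
            rw [Finset.sum_mul]
        _ ≤ G t * N := by
            refine mul_le_mul_of_nonneg_right ?_ hN
            refine le_add_of_nonneg_of_le (by positivity) ?_
            exact Finset.single_le_sum (f := fun j => ∑ i, |v i| *
              (∑ k, |Γ i j k (γ t)| + |μ * ricciSymD Γ i j (γ t)|))
              (fun j _ => by positivity) (Finset.mem_univ j)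
  have key := eq_zero_of_abs_deriv_le_mul_abs_self_of_eq_zero_right
    (fun t ht => (hF t ht).continuousAt.continuousWithinAt)
    (fun t ht => (hF t ⟨ht.1, ht.2.le⟩).hasDerivWithinAt)
    (by simpa [hγ] using hx) (fun t ht => hbound t ⟨ht.1, ht.2.le⟩) 1 (by simp)
  simpa [hγ, hv] using key

/-- Unique continuation: the zero set of the 1-jet of a solution is open and relatively closed. -/
lemma eqOn_zero_of_jet_zero {n : ℕ} {U : Set (Fin n → ℝ)} (hU : IsOpen U)
    (hUc : IsPreconnected U) {Γ : Fin n → Fin n → Fin n → (Fin n → ℝ) → ℝ}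
    (hΓ : ∀ i j k, ContDiffOn ℝ ∞ (Γ i j k) U) {μ : ℝ} {h : (Fin n → ℝ) → ℝ}
    (hh : h ∈ solSet U Γ μ) {p : Fin n → ℝ} (hp : p ∈ U) (hjet : jet h p = 0) :
    ∀ x ∈ U, h x = 0 := by
  let Z : Set (Fin n → ℝ) := {x | x ∈ U ∧ jet h x = 0}
  have hball : ∀ x ∈ U, ∃ ε > 0, ∀ y ∈ Metric.ball x ε, segment ℝ x y ⊆ U := fun x hx => by
    obtain ⟨ε, hε, hb⟩ := Metric.isOpen_iff.1 hU x hx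
    exact ⟨ε, hε, fun y hy =>
      ((convex_ball x ε).segment_subset (Metric.mem_ball_self hε) hy).trans hb⟩
  have hZo : IsOpen Z := Metric.isOpen_iff.2 fun x hx => by
    obtain ⟨ε, hε, hb⟩ := hball x hx.1
    exact ⟨ε, hε, fun y hy => ⟨hb y hy (right_mem_segment ℝ x y),
      jet_zero_of_segment hU hΓ hh (hb y hy) hx.2⟩⟩
  have hZc : closure Z ∩ U ⊆ Z := fun x hx => by
    obtain ⟨ε, hε, hb⟩ := hball x hx.2
    obtain ⟨y, hyZ, hy⟩ := Metric.mem_closure_iff.1 hx.1 ε hε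
    refine ⟨hx.2, jet_zero_of_segment hU hΓ hh ?_ hyZ.2⟩
    rw [segment_symm]
    exact hb y (Metric.mem_ball'.2 hy)
  intro x hx
  have hxZ := hUc.subset_of_closure_inter_subset hZo ⟨p, hp, hp, hjet⟩ hZc hx
  exact congrArg Prod.fst hxZ.2

lemma pd_add {n : ℕ} {f g : (Fin n → ℝ) → ℝ} {x : Fin n → ℝ} (hf : DifferentiableAt ℝ f x)
    (hg : DifferentiableAt ℝ g x) (i : Fin n) : pd i (f + g) x = pd i f x + pd i g x := by
  simp [pd, fderiv_add hf hg]

lemma pd_smul {n : ℕ} (c : ℝ) (f : (Fin n → ℝ) → ℝ) (x : Fin n → ℝ) (i : Fin n) :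
    pd i (c • f) x = c * pd i f x := by
  simp [pd, fderiv_const_smul_field]

lemma pd_congr {n : ℕ} {U : Set (Fin n → ℝ)} (hU : IsOpen U) {f g : (Fin n → ℝ) → ℝ}
    (hfg : Set.EqOn f g U) (i : Fin n) : Set.EqOn (pd i f) (pd i g) U := fun x hx => by
  simp only [pd]
  rw [(Filter.eventuallyEq_of_mem (hU.mem_nhds hx) hfg).fderiv_eq]

/-- The solutions form a vector space. Its elements are functions on all of `ℝⁿ`, with arbitrary
values off `U`. -/
def solSubmodule {n : ℕ} {U : Set (Fin n → ℝ)} (hU : IsOpen U)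
    (Γ : Fin n → Fin n → Fin n → (Fin n → ℝ) → ℝ) (μ : ℝ) : Submodule ℝ ((Fin n → ℝ) → ℝ) where
  carrier := solSet U Γ μ
  zero_mem' := by
    refine ⟨contDiffOn_const, fun x _ i j => ?_⟩
    have h0 : ∀ k, pd k (0 : (Fin n → ℝ) → ℝ) = 0 := fun k => by ext y; simp [pd]
    simp [hessD, h0]
  add_mem' := by
    rintro f g ⟨hf, ef⟩ ⟨hg, eg⟩
    have hd : ∀ {u : (Fin n → ℝ) → ℝ}, ContDiffOn ℝ ∞ u U → ∀ x ∈ U, DifferentiableAt ℝ u x :=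
      fun hu x hx => (hu.differentiableOn (by simp)).differentiableAt (hU.mem_nhds hx)
    refine ⟨hf.add hg, fun x hx i j => ?_⟩
    have e1 : ∀ k, Set.EqOn (pd k (f + g)) (pd k f + pd k g) U := fun k y hy =>
      pd_add (hd hf y hy) (hd hg y hy) k
    have e2 := pd_congr hU (e1 j) i hx
    rw [pd_add (hd (contDiffOn_pd hU hf j) x hx) (hd (contDiffOn_pd hU hg j) x hx)] at e2
    have h1 := ef x hx i j
    have h2 := eg x hx i j
    simp only [hessD] at h1 h2 ⊢
    simp only [e2, e1 _ hx, Pi.add_apply, mul_add, Finset.sum_add_distrib]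
    linarith
  smul_mem' := by
    rintro c f ⟨hf, ef⟩
    refine ⟨hf.const_smul c, fun x hx i j => ?_⟩
    have e1 : ∀ k, pd k (c • f) = c • pd k f := fun k => by ext y; exact pd_smul c f y k
    have h1 := ef x hx i j
    simp only [hessD] at h1 ⊢
    simp only [e1, pd_smul, Pi.smul_apply, smul_eq_mul, mul_left_comm _ c, ← Finset.mul_sum]
    linear_combination c * h1

/-- Evaluation of the 1-jet at a point `p ∈ U`, as a linear map on solutions. -/
noncomputable def jetMap {n : ℕ} {U : Set (Fin n → ℝ)} (hU : IsOpen U)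
    (Γ : Fin n → Fin n → Fin n → (Fin n → ℝ) → ℝ) (μ : ℝ) {p : Fin n → ℝ} (hp : p ∈ U) :
    solSubmodule hU Γ μ →ₗ[ℝ] ℝ × (Fin n → ℝ) where
  toFun h := jet h.1 p
  map_add' f g := by
    have hd : ∀ u : solSubmodule hU Γ μ, DifferentiableAt ℝ u.1 p := fun u =>
      (u.2.1.differentiableOn (by simp)).differentiableAt (hU.mem_nhds hp)
    ext j
    · rfl
    · exact pd_add (hd f) (hd g) j
  map_smul' c f := by
    ext j
    · rfl
    · exact pd_smul c f.1 p j

/-- If `ker J ≤ ker R`, then `R` factors through `J`, so its rank is bounded by the dimension of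
the codomain of `J`. -/
lemma rank_range_le_of_ker_le {E V W : Type} [AddCommGroup E] [Module ℝ E] [AddCommGroup V]
    [Module ℝ V] [AddCommGroup W] [Module ℝ W] (J : E →ₗ[ℝ] V) (R : E →ₗ[ℝ] W)
    (hJR : LinearMap.ker J ≤ LinearMap.ker R) :
    Module.rank ℝ (LinearMap.range R) ≤ Module.rank ℝ V := by
  obtain ⟨s, hs⟩ := J.rangeRestrict.exists_rightInverse_of_surjective J.range_rangeRestrict
  have hle : LinearMap.range R ≤ LinearMap.range (R ∘ₗ s) := by
    rintro _ ⟨h, rfl⟩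
    refine ⟨J.rangeRestrict h, ?_⟩
    have h1 : J (s (J.rangeRestrict h)) = J h :=
      congrArg Subtype.val (LinearMap.congr_fun hs (J.rangeRestrict h))
    have h2 : s (J.rangeRestrict h) - h ∈ LinearMap.ker J := by simp [h1]
    have h3 := hJR h2
    rw [LinearMap.mem_ker, map_sub, sub_eq_zero] at h3
    exact h3
  exact (Submodule.rank_mono hle).trans ((rank_range_le _).trans (Submodule.rank_le _))

/-- the space `E(μ)` of smooth solutions of the affine quasi-Einstein
equation on a connected open set `U ⊆ ℝⁿ` has dimension at most `n + 1`.  (Solutions are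
identified with their restrictions to `U`.) -/
theorem statement3 {n : ℕ} (U : Set (Fin n → ℝ)) (hU : IsOpen U) (hUconn : IsConnected U)
    (Γ : Fin n → Fin n → Fin n → (Fin n → ℝ) → ℝ)
    (hΓ : ∀ i j k, ContDiffOn ℝ ∞ (Γ i j k) U)
    (hΓsym : ∀ i j k, Γ i j k = Γ j i k) (μ : ℝ) :
    Module.rank ℝ ↥(Submodule.span ℝ (U.restrict '' solSet U Γ μ)) ≤ (n : Cardinal) + 1 := by
  obtain ⟨p, hp⟩ := hUconn.nonempty
  let R : solSubmodule hU Γ μ →ₗ[ℝ] (U → ℝ) :=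
    (LinearMap.funLeft ℝ ℝ (Subtype.val : U → (Fin n → ℝ))) ∘ₗ (solSubmodule hU Γ μ).subtype
  have hspan : Submodule.span ℝ (U.restrict '' solSet U Γ μ) ≤ LinearMap.range R := by
    rw [Submodule.span_le]
    rintro _ ⟨h, hh, rfl⟩
    exact ⟨⟨h, hh⟩, rfl⟩
  have hker : LinearMap.ker (jetMap hU Γ μ hp) ≤ LinearMap.ker R := fun h hh => by
    ext x
    exact eqOn_zero_of_jet_zero hU hUconn.isPreconnected hΓ h.2 hp hh x x.2
  calc Module.rank ℝ ↥(Submodule.span ℝ (U.restrict '' solSet U Γ μ))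
      ≤ Module.rank ℝ (LinearMap.range R) := Submodule.rank_mono hspan
    _ ≤ Module.rank ℝ (ℝ × (Fin n → ℝ)) := rank_range_le_of_ker_le _ R hker
    _ = (n : Cardinal) + 1 := by simp [add_comm]
end

section
/- Let O ⊆ ℝ² be open and let φ : O → ℝ be smooth with ∂₁φ ≠ 0 and ∂₂φ ≠ 0 everywhere on O. Let D^φ be the affine connection on O whose only nonzero Christoffel symbols are Γ₁₁¹ = φ₁₁/φ₁ and Γ₂₂² = φ₂₂/φ₂, where φ_i = ∂_iφ, φ_{ij} = ∂_j∂_iφ, etc. Then, for μ ∈ ℝ, φ satisfies the affine quasi-Einstein equation Hess^{D^φ}_{ij}φ = μ φ (ρ_s)_{ij} for the connection D^φ on O if and only if φ satisfies the partial differential equation 0 = (1/2) μ φ (φ₁₂₂/φ₂ + φ₁₁₂/φ₁) + φ₁₂ (1 − (1/2) μ φ (φ₂₂/φ₂² + φ₁₁/φ₁²)) on O. -/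
/-!
With `a = φ₁₁/φ₁` and `b = φ₂₂/φ₂`, the Ricci tensor of `D^φ` has vanishing diagonal and
`ρ₁₂ = -∂₁b`, `ρ₂₁ = -∂₂a`. The diagonal Hessian components `φ_{ii} - (φ_{ii}/φ_i) φ_i` vanish
as well, so the quasi-Einstein system reduces to the single equation
`φ₁₂ = -½ μ φ (∂₁b + ∂₂a)`. Expanding by the quotient rule and commuting partial derivatives
turns it into the stated PDE.
-/

open scoped ContDiff

lemma ContDiffOn.pd {n : ℕ} {O : Set (Fin n → ℝ)} (hO : IsOpen O) {f : (Fin n → ℝ) → ℝ}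
    (hf : ContDiffOn ℝ ∞ f O) (i : Fin n) : ContDiffOn ℝ ∞ (pd i f) O :=
  (hf.fderiv_of_isOpen hO (by simp)).clm_apply contDiffOn_const

lemma ContDiffOn.differentiableAt_of_isOpen {n : ℕ} {O : Set (Fin n → ℝ)} (hO : IsOpen O)
    {f : (Fin n → ℝ) → ℝ} (hf : ContDiffOn ℝ ∞ f O) {x : Fin n → ℝ} (hx : x ∈ O) :
    DifferentiableAt ℝ f x :=
  (hf.contDiffAt (hO.mem_nhds hx)).differentiableAt (by simp)

lemma pd_comm {n : ℕ} {O : Set (Fin n → ℝ)} (hO : IsOpen O) {f : (Fin n → ℝ) → ℝ}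
    (hf : ContDiffOn ℝ ∞ f O) (i j : Fin n) {x : Fin n → ℝ} (hx : x ∈ O) :
    pd i (pd j f) x = pd j (pd i f) x := by
  have hd : DifferentiableAt ℝ (fderiv ℝ f) x :=
    ((hf.fderiv_of_isOpen hO (m := ∞) (by simp)).contDiffAt
      (hO.mem_nhds hx)).differentiableAt (by simp)
  have key : ∀ k l : Fin n, pd k (pd l f) x
      = fderiv ℝ (fderiv ℝ f) x (Pi.single k 1) (Pi.single l 1) := by
    intro k l
    have h := hd.hasFDerivAt.clm_apply
      (hasFDerivAt_const (Pi.single l (1 : ℝ) : Fin n → ℝ) x)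
    unfold pd
    rw [h.fderiv]
    simp
  have hs : IsSymmSndFDerivAt ℝ f x :=
    (hf.contDiffAt (hO.mem_nhds hx)).isSymmSndFDerivAt (by
      simpa using (WithTop.coe_le_coe.2 le_top : ((2 : ℕ∞) : WithTop ℕ∞) ≤ ∞))
  rw [key, key]
  exact hs _ _

lemma pd_congr_s15 {n : ℕ} {O : Set (Fin n → ℝ)} (hO : IsOpen O) {f g : (Fin n → ℝ) → ℝ}
    (h : ∀ x ∈ O, f x = g x) (i : Fin n) {x : Fin n → ℝ} (hx : x ∈ O) :
    pd i f x = pd i g x := by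
  have : f =ᶠ[nhds x] g := Filter.eventuallyEq_of_mem (hO.mem_nhds hx) h
  unfold pd
  rw [this.fderiv_eq]

lemma pd_div {n : ℕ} {f g : (Fin n → ℝ) → ℝ} {x : Fin n → ℝ} (hf : DifferentiableAt ℝ f x)
    (hg : DifferentiableAt ℝ g x) (h0 : g x ≠ 0) (i : Fin n) :
    pd i (fun y => f y / g y) x = pd i f x / g x - f x * pd i g x / g x ^ 2 := by
  have h := hf.hasFDerivAt.mul ((hasDerivAt_inv h0).comp_hasFDerivAt x hg.hasFDerivAt)
  have e : (fun y => f y / g y) = f * (fun y => y⁻¹) ∘ g := by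
    funext y; simp [div_eq_mul_inv]
  unfold pd
  rw [e, h.fderiv]
  simp
  field_simp
  ring

/-- for the connection `D^φ` with only nonzero Christoffel symbols
`Γ₁₁¹ = φ₁₁/φ₁`, `Γ₂₂² = φ₂₂/φ₂`, the function `φ` satisfies the affine quasi-Einstein
equation `Hess^{D^φ} φ = μ φ ρ_s` on `O` iff
`0 = ½ μ φ (φ₁₂₂/φ₂ + φ₁₁₂/φ₁) + φ₁₂ (1 − ½ μ φ (φ₂₂/φ₂² + φ₁₁/φ₁²))` on `O`. -/
theorem statement15 (O : Set (Fin 2 → ℝ)) (hO : IsOpen O)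
    (φ : (Fin 2 → ℝ) → ℝ) (hφ : ContDiffOn ℝ ∞ φ O)
    (hφ1 : ∀ x ∈ O, pd 0 φ x ≠ 0) (hφ2 : ∀ x ∈ O, pd 1 φ x ≠ 0) (μ : ℝ)
    (Γ : Fin 2 → Fin 2 → Fin 2 → (Fin 2 → ℝ) → ℝ)
    (hΓ : ∀ i j k (x : Fin 2 → ℝ), Γ i j k x =
      if i = 0 ∧ j = 0 ∧ k = 0 then pd 0 (pd 0 φ) x / pd 0 φ x
      else if i = 1 ∧ j = 1 ∧ k = 1 then pd 1 (pd 1 φ) x / pd 1 φ x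
      else 0) :
    (∀ x ∈ O, ∀ i j, hessD Γ φ i j x = μ * φ x * ricciSymD Γ i j x)
    ↔ (∀ x ∈ O, 0 = (1 / 2) * μ * φ x
          * (pd 1 (pd 1 (pd 0 φ)) x / pd 1 φ x + pd 1 (pd 0 (pd 0 φ)) x / pd 0 φ x)
        + pd 1 (pd 0 φ) x * (1 - (1 / 2) * μ * φ x
          * (pd 1 (pd 1 φ) x / (pd 1 φ x) ^ 2 + pd 0 (pd 0 φ) x / (pd 0 φ x) ^ 2))) := by
  have e0 : Γ 0 0 0 = fun x => pd 0 (pd 0 φ) x / pd 0 φ x := by funext x; simp [hΓ]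
  have e1 : Γ 1 1 1 = fun x => pd 1 (pd 1 φ) x / pd 1 φ x := by funext x; simp [hΓ]
  have z001 : Γ 0 0 1 = fun _ => 0 := by funext x; simp [hΓ]
  have z010 : Γ 0 1 0 = fun _ => 0 := by funext x; simp [hΓ]
  have z011 : Γ 0 1 1 = fun _ => 0 := by funext x; simp [hΓ]
  have z100 : Γ 1 0 0 = fun _ => 0 := by funext x; simp [hΓ]
  have z101 : Γ 1 0 1 = fun _ => 0 := by funext x; simp [hΓ]
  have z110 : Γ 1 1 0 = fun _ => 0 := by funext x; simp [hΓ]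
  have pz : ∀ (i : Fin 2) x, pd i (fun _ : Fin 2 → ℝ => (0 : ℝ)) x = 0 := by
    intro i x; simp [pd]
  refine forall₂_congr fun x hx => ?_
  have h1 := hφ1 x hx
  have h2 := hφ2 x hx
  have s0 := hφ.pd hO 0
  have s1 := hφ.pd hO 1
  have dA : pd 1 (Γ 0 0 0) x = pd 1 (pd 0 (pd 0 φ)) x / pd 0 φ x
      - pd 0 (pd 0 φ) x * pd 1 (pd 0 φ) x / pd 0 φ x ^ 2 := by
    rw [e0]
    exact pd_div ((s0.pd hO 0).differentiableAt_of_isOpen hO hx)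
      (s0.differentiableAt_of_isOpen hO hx) h1 1
  have dB : pd 0 (Γ 1 1 1) x = pd 1 (pd 1 (pd 0 φ)) x / pd 1 φ x
      - pd 1 (pd 1 φ) x * pd 1 (pd 0 φ) x / pd 1 φ x ^ 2 := by
    have c3 : pd 0 (pd 1 (pd 1 φ)) x = pd 1 (pd 1 (pd 0 φ)) x := by
      rw [pd_comm hO s1 0 1 hx]
      exact pd_congr_s15 hO (fun y hy => pd_comm hO hφ 0 1 hy) 1 hx
    rw [e1, pd_div ((s1.pd hO 1).differentiableAt_of_isOpen hO hx)
      (s1.differentiableAt_of_isOpen hO hx) h2 0, c3, pd_comm hO hφ 0 1 hx]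
  have r00 : ricciD Γ 0 0 x = 0 := by
    simp [ricciD, Fin.sum_univ_two, z001, z010, z011, z100, z101, pz]
  have r11 : ricciD Γ 1 1 x = 0 := by
    simp [ricciD, Fin.sum_univ_two, z010, z011, z100, z101, z110, pz]
  have r01 : ricciD Γ 0 1 x = -pd 0 (Γ 1 1 1) x := by
    simp [ricciD, Fin.sum_univ_two, z001, z010, z011, z110, pz]
  have r10 : ricciD Γ 1 0 x = -pd 1 (Γ 0 0 0) x := by
    simp [ricciD, Fin.sum_univ_two, z001, z100, z101, z110, pz]
  have h00 : hessD Γ φ 0 0 x = 0 := by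
    simp [hessD, Fin.sum_univ_two, e0, z001, h1]
  have h11 : hessD Γ φ 1 1 x = 0 := by
    simp [hessD, Fin.sum_univ_two, e1, z110, h2]
  have h01 : hessD Γ φ 0 1 x = pd 1 (pd 0 φ) x := by
    simp [hessD, Fin.sum_univ_two, z010, z011, pd_comm hO hφ 0 1 hx]
  have h10 : hessD Γ φ 1 0 x = pd 1 (pd 0 φ) x := by
    simp [hessD, Fin.sum_univ_two, z100, z101]
  simp only [Fin.forall_fin_two, ricciSymD, h00, h11, h01, h10, r00, r11, r01, r10, dA, dB]
  constructor
  · rintro ⟨⟨-, h⟩, -⟩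
    linear_combination -h
  · intro h
    refine ⟨⟨by ring, ?_⟩, ?_, by ring⟩ <;> linear_combination -h
end
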